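/- Let f = id ∗ 1_P, where 1_P is the indicator function of the set of primes, i.e. f(n) = ∑_{ab = n} a · 1_P(b). Then ∑_{n ≤ x} f(⌊x/n⌋)/⌊x/n⌋ = x · ∑_{m ≥ 1} f(m)/(m²(m+1)) + O(x^{1/3} log x) as x → ∞. -/

import Mathlib

open Filter Finset

/-- `f = id ∗ 1_P`, i.e. `f(n) = ∑_{p ∣ n, p prime} n/p`. -/
noncomputable def idConvPrimeIndicator (n : ℕ) : ℝ :=
  ∑ d ∈ n.divisors.filter Nat.Prime, ((n / d : ℕ) : ℝ)

/-!
The number of `n ≤ x` with `d ∣ ⌊x / n⌋` is `∑ n, (⌊y / n⌋ - ⌊y / n - 1 / d⌋)` with `y = x / d`,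
a difference of two lattice-point counts under hyperbolas `n (k + α) ≤ y`, for `α = 0` and
`α = 1 / d`. The hyperbola method reduces each count to sums of the sawtooth function at
`y / (c + n) + β` with `n ≤ √y`. On dyadic blocks such a sum is compared, through differences of
the second Bernoulli function, with exponential sums that the Kusmin-Landau inequality and a
van der Corput second-difference estimate bound, and this gives `O(y^{1/3} log y)`. The main terms
combine to `y H_{1/d}`, with `H` the harmonic number of a real argument. Summing over `d` with
weights `a(d) / d` costs `∑ |a(d)| d^{-4/3}`, and `∑ a(d) d^{-2} H_{1/d}` is a rearrangement of the
series in the main term.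
-/

open Asymptotics FourierTransform

section KusminLandau

lemma norm_sum_mul_sub_succ_le {R : Type*} [SeminormedRing R] (c : ℕ → R) {w : ℕ → R}
    (hw : ∀ n, ‖w n‖ ≤ 1) (k : ℕ) :
    ‖∑ n ∈ range (k + 1), c n * (w n - w (n + 1))‖ ≤
      ‖c 0‖ + ‖c k‖ + ∑ n ∈ range k, ‖c (n + 1) - c n‖ := by
  have mul_le (a : R) (n : ℕ) : ‖a * w n‖ ≤ ‖a‖ :=
    (norm_mul_le _ _).trans (mul_le_of_le_one_right (norm_nonneg _) (hw n))
  have by_parts : ∑ n ∈ range (k + 1), c n * (w n - w (n + 1)) =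
      c 0 * w 0 - c k * w (k + 1) + ∑ n ∈ range k, (c (n + 1) - c n) * w (n + 1) := by
    induction k with
    | zero => simp [mul_sub]
    | succ k ih => rw [sum_range_succ, ih, sum_range_succ _ k]; noncomm_ring
  rw [by_parts]
  exact (norm_add_le _ _).trans <| add_le_add
    ((norm_sub_le _ _).trans (add_le_add (mul_le _ _) (mul_le _ _)))
    (norm_sum_le_of_le _ fun n _ => mul_le _ _)

lemma norm_one_sub_fourierChar (t : ℝ) : ‖1 - (𝐞 t : ℂ)‖ = 2 * |Real.sin (Real.pi * t)| := by
  rw [norm_sub_rev, Real.fourierChar_apply, mul_comm _ Complex.I,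
    Complex.norm_exp_I_mul_ofReal_sub_one, Real.norm_eq_abs, abs_mul, abs_two]
  ring_nf

lemma two_mul_le_sin_pi_mul {δ t : ℝ} (hδ : 0 ≤ δ) (hδt : δ ≤ t) (ht : t ≤ 1 - δ) :
    2 * δ ≤ Real.sin (Real.pi * t) := by
  wlog htwo : t ≤ 1 / 2 generalizing t
  · have h := this (t := 1 - t) (by linarith) (by linarith) (by linarith)
    rwa [mul_sub, mul_one, Real.sin_pi_sub] at h
  calc 2 * δ ≤ 2 / Real.pi * (Real.pi * t) := by
        rw [div_mul_eq_mul_div, ← mul_assoc, mul_right_comm,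
          mul_div_cancel_right₀ _ Real.pi_ne_zero]
        linarith
    _ ≤ _ := Real.mul_le_sin (by have := Real.pi_pos; nlinarith) (by have := Real.pi_pos; nlinarith)

lemma norm_inv_one_sub_fourierChar_le {δ t : ℝ} (hδ : 0 < δ) (hδt : δ ≤ t) (ht : t ≤ 1 - δ) :
    ‖(1 - (𝐞 t : ℂ))⁻¹‖ ≤ 1 / (4 * δ) := by
  rw [norm_inv, norm_one_sub_fourierChar, ← one_div]
  have := two_mul_le_sin_pi_mul hδ.le hδt ht
  exact one_div_le_one_div_of_le (by linarith) (by linarith [le_abs_self (Real.sin (Real.pi * t))])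

lemma inv_one_sub_fourierChar {t : ℝ} (ht : Real.sin (Real.pi * t) ≠ 0) :
    (1 - (𝐞 t : ℂ))⁻¹ = 1 / 2 + (Real.cot (Real.pi * t) / 2 : ℝ) * Complex.I := by
  refine inv_eq_of_mul_eq_one_left ?_
  have hsq := Real.sin_sq_add_cos_sq (Real.pi * t)
  rw [Real.fourierChar_apply, Complex.exp_mul_I, ← Complex.ofReal_cos, ← Complex.ofReal_sin,
    mul_assoc 2, Real.cos_two_mul, Real.sin_two_mul, Real.cot_eq_cos_div_sin]
  generalize Real.sin (Real.pi * t) = s at *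
  generalize Real.cos (Real.pi * t) = c at *
  have hs : (s : ℂ) ≠ 0 := mod_cast ht
  have hsq' : (s : ℂ) ^ 2 + (c : ℂ) ^ 2 = 1 := mod_cast hsq
  push_cast
  field_simp
  linear_combination (-2 * s * c ^ 2 : ℂ) * Complex.I_sq - 2 * Complex.I * hsq' * c

lemma antitoneOn_cot : AntitoneOn Real.cot (Set.Ioo 0 Real.pi) := by
  rintro s ⟨hs0, hs⟩ t ⟨ht0, ht⟩ hst
  have hsin : 0 ≤ Real.sin (t - s) := Real.sin_nonneg_of_nonneg_of_le_pi (by linarith) (by linarith)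
  rw [Real.sin_sub] at hsin
  rw [Real.cot_eq_cos_div_sin, Real.cot_eq_cos_div_sin, div_le_div_iff₀
    (Real.sin_pos_of_pos_of_lt_pi ht0 ht) (Real.sin_pos_of_pos_of_lt_pi hs0 hs)]
  linarith

lemma fourierChar_eq_inv_mul_sub {t : ℝ} (ht : (𝐞 t : ℂ) ≠ 1) (v : ℝ) :
    (𝐞 v : ℂ) = (1 - (𝐞 t : ℂ))⁻¹ * (𝐞 v - 𝐞 (v + t)) := by
  rw [AddChar.map_add_eq_mul, Circle.coe_mul]
  field_simp [sub_ne_zero.2 ht.symm]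

lemma fourierChar_add_intCast (t : ℝ) (m : ℤ) : 𝐞 (t + m) = 𝐞 t := by
  ext
  simp only [Real.fourierChar_apply]
  push_cast
  rw [mul_add, add_mul, Complex.exp_add, show (2 * Real.pi * m * Complex.I : ℂ) =
    m * (2 * Real.pi * Complex.I) by ring, Complex.exp_int_mul_two_pi_mul_I, mul_one]

-- The factors `(1 - 𝐞 θ)⁻¹` lie on the line `Re = 1/2` and move along it monotonically, so their
-- total variation is controlled by the two end points.
lemma sum_norm_inv_one_sub_fourierChar_succ_sub_le {θ : ℕ → ℝ} {k : ℕ}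
    (h0 : ∀ n ≤ k, 0 < θ n) (h1 : ∀ n ≤ k, θ n < 1) (hmono : ∀ n < k, θ n ≤ θ (n + 1)) :
    ∑ n ∈ range k, ‖(1 - (𝐞 (θ (n + 1)) : ℂ))⁻¹ - (1 - (𝐞 (θ n) : ℂ))⁻¹‖ ≤
      ‖(1 - (𝐞 (θ 0) : ℂ))⁻¹‖ + ‖(1 - (𝐞 (θ k) : ℂ))⁻¹‖ := by
  have hθ (n : ℕ) (hn : n ≤ k) : Real.pi * θ n ∈ Set.Ioo 0 Real.pi :=
    ⟨mul_pos Real.pi_pos (h0 n hn), mul_lt_of_lt_one_right Real.pi_pos (h1 n hn)⟩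
  have inv_eq (n : ℕ) (hn : n ≤ k) := inv_one_sub_fourierChar (t := θ n)
    (Real.sin_pos_of_mem_Ioo (hθ n hn)).ne'
  have cot_le (n : ℕ) (hn : n ≤ k) :
      |Real.cot (Real.pi * θ n) / 2| ≤ ‖(1 - (𝐞 (θ n) : ℂ))⁻¹‖ := by
    simpa [inv_eq n hn, -Complex.ofReal_cot] using Complex.abs_im_le_norm (1 - (𝐞 (θ n) : ℂ))⁻¹
  have norm_sub_eq (n : ℕ) (hn : n < k) :
      ‖(1 - (𝐞 (θ (n + 1)) : ℂ))⁻¹ - (1 - (𝐞 (θ n) : ℂ))⁻¹‖ =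
        Real.cot (Real.pi * θ n) / 2 - Real.cot (Real.pi * θ (n + 1)) / 2 := by
    have hcot := antitoneOn_cot (hθ n hn.le) (hθ (n + 1) hn)
      (mul_le_mul_of_nonneg_left (hmono n hn) Real.pi_pos.le)
    rw [inv_eq n hn.le, inv_eq (n + 1) hn, add_sub_add_left_eq_sub, ← sub_mul, ← Complex.ofReal_sub,
      norm_mul, Complex.norm_I, mul_one, Complex.norm_real, Real.norm_eq_abs, abs_sub_comm,
      abs_of_nonneg (by linarith)]
  rw [sum_congr rfl fun n hn => norm_sub_eq n (mem_range.1 hn), sum_range_sub']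
  linarith [cot_le 0 k.zero_le, cot_le k le_rfl, le_abs_self (Real.cot (Real.pi * θ 0) / 2),
    neg_abs_le (Real.cot (Real.pi * θ k) / 2)]

theorem norm_sum_fourierChar_le_of_increments_away {u : ℕ → ℝ} {k : ℕ} {m : ℤ} {δ : ℝ}
    (hδ : 0 < δ) (hlo : ∀ n < k, m + δ ≤ u (n + 1) - u n)
    (hhi : ∀ n < k, u (n + 1) - u n ≤ m + 1 - δ)
    (hmono : ∀ n, n + 1 < k → u (n + 1) - u n ≤ u (n + 2) - u (n + 1)) :
    ‖∑ n ∈ range k, (𝐞 (u n) : ℂ)‖ ≤ 1 / δ := by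
  obtain _ | k := k
  · simpa using hδ.le
  set θ : ℕ → ℝ := fun n => u (n + 1) - u n - m
  have hδθ (n : ℕ) (hn : n ≤ k) : δ ≤ θ n := by linarith [hlo n (by lia)]
  have hθδ (n : ℕ) (hn : n ≤ k) : θ n ≤ 1 - δ := by linarith [hhi n (by lia)]
  have succ_eq (n : ℕ) : 𝐞 (u (n + 1)) = 𝐞 (u n + θ n) := by
    rw [← fourierChar_add_intCast (u n + θ n) m]
    congr 1
    ring
  have term_eq (n : ℕ) (hn : n ≤ k) :
      (𝐞 (u n) : ℂ) = (1 - (𝐞 (θ n) : ℂ))⁻¹ * (𝐞 (u n) - 𝐞 (u (n + 1))) := by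
    rw [succ_eq]
    refine fourierChar_eq_inv_mul_sub (sub_ne_zero.1 (norm_ne_zero_iff.1 ?_)).symm _
    rw [norm_one_sub_fourierChar]
    have := two_mul_le_sin_pi_mul hδ.le (hδθ n hn) (hθδ n hn)
    exact (mul_pos two_pos (abs_pos.2 (by linarith))).ne'
  have variation := sum_norm_inv_one_sub_fourierChar_succ_sub_le (θ := θ)
    (fun n hn => hδ.trans_le (hδθ n hn)) (fun n hn => by linarith [hθδ n hn])
    (fun n hn => by linarith [hmono n (by lia)])
  have endpoint (n : ℕ) (hn : n ≤ k) := norm_inv_one_sub_fourierChar_le hδ (hδθ n hn) (hθδ n hn)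
  calc ‖∑ n ∈ range (k + 1), (𝐞 (u n) : ℂ)‖
      = ‖∑ n ∈ range (k + 1), (1 - (𝐞 (θ n) : ℂ))⁻¹ * (𝐞 (u n) - 𝐞 (u (n + 1)))‖ := by
        rw [sum_congr rfl fun n hn => term_eq n (Nat.lt_succ_iff.1 (mem_range.1 hn))]
    _ ≤ _ := norm_sum_mul_sub_succ_le _ (fun n => (Circle.norm_coe _).le) k
    _ ≤ 4 * (1 / (4 * δ)) := by linarith [endpoint 0 k.zero_le, endpoint k le_rfl]
    _ = 1 / δ := by field_simp

end KusminLandau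

section SecondDifference

lemma exists_eq_Ico_of_ordConnected (s : Finset ℕ) (hs : (s : Set ℕ).OrdConnected) :
    ∃ a b, s = Ico a b := by
  rcases s.eq_empty_or_nonempty with rfl | hne
  · exact ⟨0, 0, rfl⟩
  refine ⟨s.min' hne, s.max' hne + 1, ?_⟩
  ext n
  rw [mem_Ico, Nat.lt_succ_iff]
  exact ⟨fun hn => ⟨s.min'_le n hn, s.le_max' n hn⟩,
    fun hn => hs.out (s.min'_mem hne) (s.max'_mem hne) hn⟩

lemma mul_sub_le_of_increment_gap {θ : ℕ → ℝ} {μ : ℝ} {N : ℕ}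
    (hgap : ∀ n < N, μ ≤ θ (n + 1) - θ n) {i j : ℕ} (hij : i ≤ j) (hj : j ≤ N) :
    μ * ((j : ℝ) - i) ≤ θ j - θ i := by
  induction j, hij using Nat.le_induction with
  | base => simp
  | succ j _ ih =>
    have := ih (by lia)
    have := hgap j (by lia)
    push_cast
    linarith

lemma monotoneOn_of_increment_gap {θ : ℕ → ℝ} {μ : ℝ} {N : ℕ} (hμ : 0 ≤ μ)
    (hgap : ∀ n < N, μ ≤ θ (n + 1) - θ n) : MonotoneOn θ (Set.Iic N) :=
  fun _ _ _ hj hij => sub_nonneg.1 <|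
    (mul_nonneg hμ (sub_nonneg.2 (Nat.cast_le.2 hij))).trans
      (mul_sub_le_of_increment_gap hgap hij hj)

lemma card_le_of_increment_gap {θ : ℕ → ℝ} {μ δ c : ℝ} {N : ℕ} (hμ : 0 < μ) (hδ : 0 ≤ δ)
    (hgap : ∀ n < N, μ ≤ θ (n + 1) - θ n) {s : Finset ℕ} (hs : s ⊆ range N)
    (hlo : ∀ n ∈ s, c ≤ θ n) (hhi : ∀ n ∈ s, θ n ≤ c + δ) :
    (#s : ℝ) ≤ δ / μ + 1 := by
  rcases s.eq_empty_or_nonempty with rfl | hne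
  · simpa using by positivity
  set a := s.min' hne
  set b := s.max' hne
  have hab : a ≤ b := s.min'_le _ (s.max'_mem hne)
  have card_le : #s ≤ b - a + 1 := by
    have := card_le_card (t := Icc a b) fun n hn => mem_Icc.2 ⟨s.min'_le n hn, s.le_max' n hn⟩
    rw [Nat.card_Icc] at this
    lia
  calc (#s : ℝ) ≤ (b - a : ℝ) + 1 := by
        rw [← Nat.cast_sub hab]
        exact_mod_cast card_le
    _ ≤ δ / μ + 1 := by
      rw [add_le_add_iff_right, le_div_iff₀' hμ]
      linarith [mul_sub_le_of_increment_gap hgap hab (mem_range.1 (hs (s.max'_mem hne))).le,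
        hlo a (s.min'_mem hne), hhi b (s.max'_mem hne)]

lemma norm_sum_fourierChar_le_card {ι : Type*} (u : ι → ℝ) (s : Finset ι) :
    ‖∑ i ∈ s, (𝐞 (u i) : ℂ)‖ ≤ #s := by
  simpa only [Circle.norm_coe, sum_const, nsmul_one] using norm_sum_le s fun i => (𝐞 (u i) : ℂ)

lemma norm_sum_fourierChar_filter_le {u : ℕ → ℝ} {N : ℕ} {δ : ℝ} {m : ℤ} (hδ : 0 < δ)
    (hmono : MonotoneOn (fun n => u (n + 1) - u n) (Set.Iic N)) :
    ‖∑ n ∈ range N with m + δ ≤ u (n + 1) - u n ∧ u (n + 1) - u n < m + 1 - δ,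
      (𝐞 (u n) : ℂ)‖ ≤ 1 / δ := by
  set s := {n ∈ range N | m + δ ≤ u (n + 1) - u n ∧ u (n + 1) - u n < m + 1 - δ} with hs
  have mem_s (n : ℕ) :
      n ∈ s ↔ n < N ∧ m + δ ≤ u (n + 1) - u n ∧ u (n + 1) - u n < m + 1 - δ := by
    rw [hs, mem_filter, mem_range]
  have s_ordConnected : (s : Set ℕ).OrdConnected := by
    refine ⟨fun i hi j hj n ⟨hin, hnj⟩ => ?_⟩
    rw [mem_coe, mem_s] at *
    have hnN : n < N := hnj.trans_lt hj.1
    exact ⟨hnN, hi.2.1.trans (hmono hi.1.le hnN.le hin), (hmono hnN.le hj.1.le hnj).trans_lt hj.2.2⟩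
  obtain ⟨a, b, hab⟩ := exists_eq_Ico_of_ordConnected s s_ordConnected
  have mem_of_lt (n : ℕ) (hn : n < b - a) := (mem_s (a + n)).1 (by rw [hab, mem_Ico]; lia)
  rw [hab, sum_Ico_eq_sum_range]
  exact norm_sum_fourierChar_le_of_increments_away (u := fun n => u (a + n)) (m := m) hδ
    (fun n hn => (mem_of_lt n hn).2.1) (fun n hn => (mem_of_lt n hn).2.2.le)
    fun n hn => hmono (mem_of_lt n (by lia)).1.le (mem_of_lt (n + 1) hn).1.le (by lia)

-- The fibres of `⌊θ + √μ⌋`, rather than of `⌊θ⌋`, have the `θ n` close to an integer at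
-- one end only.
lemma norm_sum_fourierChar_fiber_le {u : ℕ → ℝ} {N : ℕ} {μ : ℝ} (hμ : 0 < μ) (hμ1 : μ ≤ 1)
    (hgap : ∀ n < N, μ ≤ (u (n + 2) - u (n + 1)) - (u (n + 1) - u n)) (m : ℤ) :
    ‖∑ n ∈ range N with ⌊u (n + 1) - u n + √μ⌋ = m, (𝐞 (u n) : ℂ)‖ ≤ 4 / √μ := by
  set θ : ℕ → ℝ := fun n => u (n + 1) - u n
  set δ := √μ
  have hδ : 0 < δ := Real.sqrt_pos.2 hμ
  have one_le : 1 ≤ 1 / δ := one_le_one_div hδ (Real.sqrt_le_one.2 hμ1)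
  have width : (2 * δ) / μ = 2 / δ := by
    rw [← Real.mul_self_sqrt hμ.le]
    exact mul_div_mul_right _ _ hδ.ne'
  have far_eq : {n ∈ {n ∈ range N | ⌊θ n + δ⌋ = m} | ¬ θ n < m + δ} =
      {n ∈ range N | m + δ ≤ θ n ∧ θ n < m + 1 - δ} := by
    rw [filter_filter]
    refine filter_congr fun n _ => ?_
    rw [Int.floor_eq_iff, not_lt]
    exact ⟨fun h => ⟨h.2, by linarith [h.1.2]⟩, fun h => ⟨⟨by linarith, by linarith⟩, h.1⟩⟩
  have near := (norm_sum_fourierChar_le_card u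
    {n ∈ {n ∈ range N | ⌊θ n + δ⌋ = m} | θ n < m + δ}).trans <|
    card_le_of_increment_gap (θ := θ) (c := m - δ) (δ := 2 * δ) hμ (by positivity) hgap
      ((filter_subset _ _).trans (filter_subset _ _))
      (fun n hn => by
        rw [mem_filter, mem_filter, Int.floor_eq_iff] at hn
        linarith [hn.1.2.1])
      (fun n hn => by linarith [(mem_filter.1 hn).2])
  rw [width] at near
  have far := norm_sum_fourierChar_filter_le (m := m) hδ (monotoneOn_of_increment_gap hμ.le hgap)
  rw [← sum_filter_add_sum_filter_not _ (fun n => θ n < m + δ), far_eq]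
  refine (norm_add_le _ _).trans ?_
  rw [show 4 / δ = 2 / δ + 1 / δ + 1 / δ by ring]
  linarith

theorem norm_sum_fourierChar_le_of_second_difference {u : ℕ → ℝ} {N : ℕ} {μ R : ℝ} (hμ : 0 < μ)
    (hμ1 : μ ≤ 1) (hgap : ∀ n < N, μ ≤ (u (n + 2) - u (n + 1)) - (u (n + 1) - u n))
    (hR : (u (N + 1) - u N) - (u 1 - u 0) ≤ R) :
    ‖∑ n ∈ range N, (𝐞 (u n) : ℂ)‖ ≤ (R + 2) * (4 / √μ) := by
  set f : ℕ → ℤ := fun n => ⌊u (n + 1) - u n + √μ⌋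
  have f_mono : MonotoneOn f (Set.Iic N) := fun i hi j hj hij =>
    Int.floor_mono (add_le_add_left
      (monotoneOn_of_increment_gap (θ := fun n => u (n + 1) - u n) hμ.le hgap hi hj hij) _)
  have f_mem (n : ℕ) (hn : n ∈ range N) : f n ∈ Icc (f 0) (f N) := by
    have hnN : n ≤ N := (mem_range.1 hn).le
    exact mem_Icc.2 ⟨f_mono N.zero_le hnN n.zero_le, f_mono hnN Set.self_mem_Iic hnN⟩
  have card_le : (#(Icc (f 0) (f N)) : ℝ) ≤ R + 2 := by
    have h0N : f 0 ≤ f N + 1 := (f_mono N.zero_le Set.self_mem_Iic N.zero_le).trans (by lia)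
    have card_eq : (#(Icc (f 0) (f N)) : ℝ) = f N + 1 - f 0 :=
      mod_cast Int.card_Icc_of_le _ _ h0N
    linarith [Int.floor_le (u (N + 1) - u N + √μ), Int.lt_floor_add_one (u 1 - u 0 + √μ)]
  calc ‖∑ n ∈ range N, (𝐞 (u n) : ℂ)‖
      = ‖∑ m ∈ Icc (f 0) (f N), ∑ n ∈ range N with f n = m, (𝐞 (u n) : ℂ)‖ := by
        rw [sum_fiberwise_of_maps_to f_mem]
    _ ≤ ∑ m ∈ Icc (f 0) (f N), 4 / √μ :=
        norm_sum_le_of_le _ fun m _ => norm_sum_fourierChar_fiber_le hμ hμ1 hgap m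
    _ ≤ (R + 2) * (4 / √μ) := by
        rw [sum_const, nsmul_eq_mul]
        gcongr

end SecondDifference

section Hyperbola

lemma div_second_difference_eq {Λ v : ℝ} (hv : 0 < v) :
    Λ / (v + 2) - Λ / (v + 1) - (Λ / (v + 1) - Λ / v) = 2 * Λ / (v * (v + 1) * (v + 2)) := by
  field_simp
  ring

lemma le_div_second_difference {c t Λ : ℝ} (hΛ : 0 ≤ Λ) (ht : 0 ≤ t) (htc : t + 1 ≤ c) :
    Λ / (9 * c ^ 3) ≤ Λ / (c + t + 2) - Λ / (c + t + 1) - (Λ / (c + t + 1) - Λ / (c + t)) := by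
  have hc : 0 < c := by linarith
  rw [div_second_difference_eq (by positivity), div_le_div_iff₀ (by positivity) (by positivity)]
  calc Λ * ((c + t) * (c + t + 1) * (c + t + 2))
      ≤ Λ * ((2 * c) * (2 * c) * (3 * c)) := by gcongr <;> linarith
    _ ≤ 2 * Λ * (9 * c ^ 3) := by linarith [mul_nonneg hΛ (pow_pos hc 3).le]

lemma div_sub_div_add_one_le {c Λ : ℝ} (hΛ : 0 ≤ Λ) (hc : 0 < c) :
    Λ / c - Λ / (c + 1) ≤ Λ / c ^ 2 := by
  rw [div_sub_div _ _ (by positivity) (by positivity), div_le_div_iff₀ (by positivity)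
    (by positivity)]
  nlinarith [mul_nonneg hΛ hc.le]

lemma norm_sum_fourierChar_div_le {c Λ : ℝ} {N : ℕ} (hc : 1 ≤ c) (hcΛ : c ^ 2 ≤ 4 * Λ)
    (hN : N ≤ c) (β : ℝ) :
    ‖∑ n ∈ range N, (𝐞 (Λ / (c + n) + β) : ℂ)‖ ≤ 108 * √(Λ / c) := by
  have hc0 : 0 < c := by linarith
  have hΛ : 0 < Λ := by nlinarith
  set μ : ℝ := Λ / (9 * c ^ 3) with hμ
  have hμ0 : 0 < μ := by positivity
  have sqrt_eq : √(Λ / c) = 3 * c * √μ := by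
    rw [show Λ / c = (3 * c) ^ 2 * μ by rw [hμ]; field_simp; norm_num,
      Real.sqrt_mul (by positivity), Real.sqrt_sq (by positivity)]
  obtain hμ1 | hμ1 := lt_or_ge 1 μ
  · have one_le : 1 ≤ √μ := Real.one_le_sqrt.2 hμ1.le
    calc _ ≤ (#(range N) : ℝ) := norm_sum_fourierChar_le_card _ _
      _ ≤ 108 * √(Λ / c) := by rw [card_range, sqrt_eq]; nlinarith
  have second_difference (n : ℕ) (hn : n < N) :
      μ ≤ Λ / (c + (n + 2 : ℕ)) + β - (Λ / (c + (n + 1 : ℕ)) + β) -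
        (Λ / (c + (n + 1 : ℕ)) + β - (Λ / (c + n) + β)) := by
    rw [add_sub_add_right_eq_sub, add_sub_add_right_eq_sub]
    push_cast
    rw [← add_assoc, ← add_assoc]
    exact le_div_second_difference hΛ.le n.cast_nonneg (le_trans (mod_cast hn) hN)
  have variation : Λ / (c + (N + 1 : ℕ)) + β - (Λ / (c + N) + β) -
      (Λ / (c + (1 : ℕ)) + β - (Λ / (c + (0 : ℕ)) + β)) ≤ Λ / c ^ 2 := by
    have last : Λ / (c + (N + 1 : ℕ)) ≤ Λ / (c + N) := by gcongr; lia
    have first := div_sub_div_add_one_le hΛ.le hc0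
    push_cast at last ⊢
    rw [add_zero]
    linarith
  calc _ ≤ (Λ / c ^ 2 + 2) * (4 / √μ) :=
        norm_sum_fourierChar_le_of_second_difference hμ0 hμ1 second_difference variation
    _ ≤ 9 * (Λ / c ^ 2) * (4 / √μ) := by
        gcongr
        have : 1 / 4 ≤ Λ / c ^ 2 := by
          rw [div_le_div_iff₀ (by positivity) (by positivity)]
          linarith
        linarith
    _ = 9 * (9 * c * (√μ * √μ)) * (4 / √μ) := by
        rw [Real.mul_self_sqrt hμ0.le, hμ]
        field_simp
    _ = 108 * √(Λ / c) := by
        rw [sqrt_eq]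
        have := Real.sqrt_pos.2 hμ0
        field_simp
        norm_num

end Hyperbola

section Sawtooth

/-- The sawtooth function, i.e. the periodic first Bernoulli function; at an integer its value is
`-1/2`. -/
noncomputable def sawtooth (t : ℝ) : ℝ := Int.fract t - 1 / 2

lemma bernoulliFun_two_fract_le (t : ℝ) : bernoulliFun 2 (Int.fract t) ≤ bernoulliFun 2 t := by
  have key : 0 ≤ (⌊t⌋ : ℝ) * (2 * Int.fract t + ⌊t⌋ - 1) := by
    obtain h | h | h : ⌊t⌋ ≤ -1 ∨ ⌊t⌋ = 0 ∨ 1 ≤ ⌊t⌋ := by lia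
    · have : (⌊t⌋ : ℝ) ≤ -1 := mod_cast h
      exact mul_nonneg_of_nonpos_of_nonpos (by linarith) (by linarith [Int.fract_lt_one t])
    · simp [h]
    · have : (1 : ℝ) ≤ ⌊t⌋ := mod_cast h
      exact mul_nonneg (by linarith) (by linarith [Int.fract_nonneg t])
  rw [bernoulliFun_two, bernoulliFun_two]
  conv_rhs => rw [← Int.fract_add_floor t]
  linarith

lemma bernoulliFun_two_fract_add_le (t s : ℝ) :
    bernoulliFun 2 (Int.fract (t + s)) - bernoulliFun 2 (Int.fract t) ≤
      2 * s * sawtooth t + s ^ 2 := by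
  have h := bernoulliFun_two_fract_le (Int.fract t + s)
  rw [← Int.fract_add_intCast _ ⌊t⌋, add_right_comm, Int.fract_add_floor,
    bernoulliFun_two (Int.fract t + s)] at h
  rw [bernoulliFun_two (Int.fract t), sawtooth]
  linarith

lemma hasSum_cos_bernoulliFun_two_fract (t : ℝ) :
    HasSum (fun h : ℕ => 1 / (h : ℝ) ^ 2 * Real.cos (2 * Real.pi * (h * t)))
      (Real.pi ^ 2 * bernoulliFun 2 (Int.fract t)) := by
  convert! hasSum_one_div_nat_pow_mul_cos one_ne_zero (x := Int.fract t)
    ⟨Int.fract_nonneg t, (Int.fract_lt_one t).le⟩ using 1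
  · funext h
    rw [← Real.cos_sub_int_mul_two_pi _ (h * ⌊t⌋), ← Int.self_sub_floor]
    push_cast
    ring_nf
  · change _ = _ * bernoulliFun 2 (Int.fract t)
    rw [show (2 * 1 : ℕ).factorial = 2 from rfl]
    push_cast
    ring

lemma min_one_sq_le {x : ℝ} (hx : 0 ≤ x) : min 1 (x ^ 2) ≤ 4 * x ^ 2 / (1 + x) ^ 2 := by
  rw [le_div_iff₀ (by positivity)]
  obtain h | h := le_total x 1
  · calc min 1 (x ^ 2) * (1 + x) ^ 2 ≤ x ^ 2 * (1 + 1) ^ 2 := by gcongr; exact min_le_right _ _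
      _ = 4 * x ^ 2 := by ring
  · calc min 1 (x ^ 2) * (1 + x) ^ 2 ≤ 1 * (x + x) ^ 2 := by gcongr; exact min_le_left _ _
      _ = 4 * x ^ 2 := by ring

lemma div_mul_min_one_le_sub {a b r : ℝ} (hr : 0 ≤ r) (ha : 0 ≤ a) (hb : 0 < b)
    (hab : b ^ 2 - a ^ 2 = 1) :
    b / (b ^ 2) ^ 2 * min 1 (b ^ 2 * r ^ 2) ≤
      8 * (r ^ 2 * b / (1 + r * b) - r ^ 2 * a / (1 + r * a)) := by
  have hle : a ≤ b := by nlinarith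
  calc b / (b ^ 2) ^ 2 * min 1 (b ^ 2 * r ^ 2)
      ≤ b / (b ^ 2) ^ 2 * (4 * (b * r) ^ 2 / (1 + b * r) ^ 2) := by
        rw [← mul_pow]
        gcongr
        exact min_one_sq_le (by positivity)
    _ = 4 * r ^ 2 / (1 + r * b) ^ 2 * ((b - a) * (b + a) / b) := by
        rw [mul_comm (b - a), ← sq_sub_sq, hab]
        field_simp
    _ ≤ 4 * r ^ 2 / ((1 + r * b) * (1 + r * a)) * ((b - a) * (b + b) / b) := by
        rw [sq (1 + r * b)]
        have : 0 ≤ b - a := sub_nonneg.2 hle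
        gcongr
    _ = 8 * (r ^ 2 * b / (1 + r * b) - r ^ 2 * a / (1 + r * a)) := by
        field_simp
        ring

lemma sum_sqrt_div_sq_mul_min_le {δ : ℝ} (hδ : 0 ≤ δ) (J : ℕ) :
    ∑ h ∈ range J, √(h : ℝ) / (h : ℝ) ^ 2 * min 1 (h * δ) ≤ 8 * √δ := by
  set r := √δ with hr
  have hr0 : 0 ≤ r := Real.sqrt_nonneg δ
  have partial_sum_le : ∑ h ∈ range (J + 1), √(h : ℝ) / (h : ℝ) ^ 2 * min 1 (h * δ) ≤
      8 * (r ^ 2 * √J / (1 + r * √J)) := by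
    induction J with
    | zero => simp
    | succ J ih =>
      rw [sum_range_succ]
      refine (add_le_add_left ih _).trans ?_
      rw [← le_sub_iff_add_le', ← mul_sub, ← Real.sq_sqrt hδ, ← hr,
        ← Real.sq_sqrt (Nat.cast_nonneg (J + 1)), Real.sqrt_sq (Real.sqrt_nonneg _)]
      refine div_mul_min_one_le_sub hr0 (Real.sqrt_nonneg _) (Real.sqrt_pos.2 (by positivity)) ?_
      rw [Real.sq_sqrt (by positivity), Real.sq_sqrt (by positivity)]
      simp
  calc _ ≤ _ := sum_le_sum_of_subset_of_nonneg (range_subset_range.2 J.le_succ)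
        fun h _ _ => by positivity
    _ ≤ _ := partial_sum_le
    _ ≤ 8 * r := by
        gcongr
        rw [div_le_iff₀ (by positivity)]
        nlinarith

lemma norm_fourierChar_sub_one_le (t : ℝ) : ‖(𝐞 t : ℂ) - 1‖ ≤ 2 * Real.pi * min 1 |t| := by
  rw [mul_min_of_nonneg _ _ Real.two_pi_pos.le, mul_one, le_min_iff]
  constructor
  · linarith [norm_sub_le (𝐞 t : ℂ) 1, Circle.norm_coe (𝐞 t), norm_one (α := ℂ),
      Real.pi_gt_three]
  · rw [Real.fourierChar_apply, mul_comm _ Complex.I]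
    refine (Real.norm_exp_I_mul_ofReal_sub_one_le).trans_eq ?_
    rw [Real.norm_eq_abs, abs_mul, abs_of_pos Real.two_pi_pos]

lemma abs_sum_cos_sub_cos_le {ι : Type*} (u : ι → ℝ) (N : Finset ι) (s : ℝ) :
    |∑ i ∈ N, (Real.cos (2 * Real.pi * (u i + s)) - Real.cos (2 * Real.pi * u i))| ≤
      ‖∑ i ∈ N, (𝐞 (u i) : ℂ)‖ * (2 * Real.pi * min 1 |s|) := by
  have re_fourierChar (t : ℝ) : Real.cos (2 * Real.pi * t) = (𝐞 t : ℂ).re := by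
    rw [Real.fourierChar_apply, Complex.exp_ofReal_mul_I_re]
  have sum_eq : ∑ i ∈ N, (Real.cos (2 * Real.pi * (u i + s)) - Real.cos (2 * Real.pi * u i)) =
      ((∑ i ∈ N, (𝐞 (u i) : ℂ)) * (𝐞 s - 1)).re := by
    rw [sum_mul, Complex.re_sum]
    refine sum_congr rfl fun i _ => ?_
    rw [re_fourierChar, re_fourierChar, AddChar.map_add_eq_mul, Circle.coe_mul, ← Complex.sub_re,
      mul_sub, mul_one]
  rw [sum_eq]
  refine (Complex.abs_re_le_norm _).trans ?_
  rw [norm_mul]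
  exact mul_le_mul_of_nonneg_left (norm_fourierChar_sub_one_le s) (norm_nonneg _)

lemma abs_sum_bernoulliFun_two_fract_add_sub_le {ι : Type*} {u : ι → ℝ} {N : Finset ι} {A : ℝ}
    (hA : 0 ≤ A) (hu : ∀ h : ℕ, h ≠ 0 → ‖∑ i ∈ N, (𝐞 (h * u i) : ℂ)‖ ≤ A * √h) (s : ℝ) :
    |∑ i ∈ N, (bernoulliFun 2 (Int.fract (u i + s)) - bernoulliFun 2 (Int.fract (u i)))| ≤
      6 * A * √|s| := by
  have fourier := hasSum_sum (s := N) fun i _ =>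
    (hasSum_cos_bernoulliFun_two_fract (u i + s)).sub (hasSum_cos_bernoulliFun_two_fract (u i))
  simp_rw [← mul_sub, ← mul_sum] at fourier
  have term_le (h : ℕ) : |1 / (h : ℝ) ^ 2 * ∑ i ∈ N, (Real.cos (2 * Real.pi * (h * (u i + s))) -
      Real.cos (2 * Real.pi * (h * u i)))| ≤
      2 * Real.pi * A * (√(h : ℝ) / (h : ℝ) ^ 2 * min 1 (h * |s|)) := by
    obtain rfl | hh := eq_or_ne h 0
    · simp
    have cos_le := abs_sum_cos_sub_cos_le (fun i => h * u i) N (h * s)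
    rw [abs_mul (h : ℝ) s, Nat.abs_cast] at cos_le
    simp_rw [mul_add (h : ℝ)]
    rw [abs_mul, abs_of_nonneg (show 0 ≤ 1 / (h : ℝ) ^ 2 by positivity)]
    calc _ ≤ 1 / (h : ℝ) ^ 2 * (A * √h * (2 * Real.pi * min 1 (h * |s|))) := by
          gcongr
          exact cos_le.trans (by gcongr; exact hu h hh)
      _ = _ := by ring
  have pi_sq_mul_le := le_of_tendsto fourier.tendsto_sum_nat.abs <| Eventually.of_forall fun J =>
    (abs_sum_le_sum_abs _ _).trans <| (sum_le_sum fun h _ => term_le h).trans <| by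
      rw [← mul_sum]
      exact mul_le_mul_of_nonneg_left (sum_sqrt_div_sq_mul_min_le (abs_nonneg s) J)
        (by positivity)
  rw [abs_mul, abs_of_pos (by positivity)] at pi_sq_mul_le
  refine le_of_mul_le_mul_left (pi_sq_mul_le.trans ?_) (by positivity : 0 < Real.pi ^ 2)
  have : 0 ≤ Real.pi * (A * √|s|) := by positivity
  nlinarith [Real.pi_gt_three]

theorem abs_sum_sawtooth_le_of_norm_sum_fourierChar_le {ι : Type*} {u : ι → ℝ} {N : Finset ι}
    {A δ : ℝ} (hA : 0 ≤ A) (hδ : 0 < δ)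
    (hu : ∀ h : ℕ, h ≠ 0 → ‖∑ i ∈ N, (𝐞 (h * u i) : ℂ)‖ ≤ A * √h) :
    |∑ i ∈ N, sawtooth (u i)| ≤ 3 * A / √δ + δ / 2 * #N := by
  have shift_le (s : ℝ) (hs : |s| = δ) :
      -(2 * s * ∑ i ∈ N, sawtooth (u i)) ≤ 6 * A * √δ + δ ^ 2 * #N := by
    have smooth := neg_le_of_abs_le (abs_sum_bernoulliFun_two_fract_add_sub_le hA hu s)
    have compare := sum_le_sum fun i (_ : i ∈ N) => bernoulliFun_two_fract_add_le (u i) s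
    rw [sum_add_distrib, ← mul_sum, sum_const, nsmul_eq_mul, ← sq_abs s] at compare
    rw [hs] at smooth compare
    linarith
  have rhs_eq : 6 * A * √δ + δ ^ 2 * #N = 2 * δ * (3 * A / √δ + δ / 2 * #N) := by
    have := Real.sqrt_pos.2 hδ
    field_simp
    linear_combination 6 * A * Real.mul_self_sqrt hδ.le
  have neg_le := shift_le δ (abs_of_pos hδ)
  have le := shift_le (-δ) (by rw [abs_neg, abs_of_pos hδ])
  rw [rhs_eq] at neg_le le
  refine le_of_mul_le_mul_left ?_ (by positivity : 0 < 2 * δ)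
  rw [← abs_of_pos (by positivity : 0 < 2 * δ), ← abs_mul, abs_of_pos (by positivity : 0 < 2 * δ),
    abs_le]
  constructor <;> linarith

end Sawtooth

section SawtoothHyperbola

lemma rpow_one_third_pow_three {y : ℝ} (hy : 0 ≤ y) : (y ^ ((1 : ℝ) / 3)) ^ 3 = y := by
  rw [← Real.rpow_natCast, ← Real.rpow_mul hy]
  norm_num

lemma abs_sum_sawtooth_div_le_of_le {c y : ℝ} {N : ℕ} (hc : 1 ≤ c) (hcy : c ^ 2 ≤ 4 * y)
    (hN : N ≤ c) (β : ℝ) :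
    |∑ n ∈ range N, sawtooth (y / (c + n) + β)| ≤ 325 * y ^ ((1 : ℝ) / 3) := by
  have hc0 : 0 < c := by linarith
  have hy : 0 < y := by nlinarith
  set T := y ^ ((1 : ℝ) / 3)
  have hT : 0 < T := Real.rpow_pos_of_pos hy _
  have exponential_sum_le (h : ℕ) (hh : h ≠ 0) :
      ‖∑ n ∈ range N, (𝐞 (h * (y / (c + n) + β)) : ℂ)‖ ≤ 108 * √(y / c) * √h := by
    have one_le : (1 : ℝ) ≤ h := mod_cast Nat.one_le_iff_ne_zero.2 hh
    simp_rw [mul_add (h : ℝ), ← mul_div_assoc]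
    rw [mul_assoc, ← Real.sqrt_mul (by positivity), div_mul_eq_mul_div, mul_comm y]
    exact norm_sum_fourierChar_div_le hc (by nlinarith) hN _
  have sqrt_eq : √(y / c) = T * √(T / c) := by
    rw [← rpow_one_third_pow_three hy.le, show T ^ 3 / c = T ^ 2 * (T / c) by ring,
      Real.sqrt_mul (sq_nonneg T), Real.sqrt_sq hT.le]
  -- `T / c` balances the two terms of the smoothing bound.
  calc _ ≤ 3 * (108 * √(y / c)) / √(T / c) + T / c / 2 * #(range N) :=
        abs_sum_sawtooth_le_of_norm_sum_fourierChar_le (by positivity) (by positivity)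
          exponential_sum_le
    _ ≤ 324 * T + T / c / 2 * c := by
        gcongr
        · rw [sqrt_eq]
          have := Real.sqrt_pos.2 (div_pos hT hc0)
          exact le_of_eq (by field_simp; norm_num)
        · rwa [card_range]
    _ ≤ 325 * T := by
        rw [div_right_comm, div_mul_cancel₀ _ hc0.ne']
        linarith

lemma abs_sum_sawtooth_div_le {c y : ℝ} {N : ℕ} (hc1 : 1 ≤ c) (hc2 : c ≤ 2)
    (hN : (N : ℝ) ^ 2 ≤ y) (β : ℝ) :
    |∑ n ∈ range N, sawtooth (y / (c + n) + β)| ≤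
      975 * y ^ ((1 : ℝ) / 3) * Real.log (N + 1) := by
  have hy : 0 ≤ y := (sq_nonneg _).trans hN
  set T := y ^ ((1 : ℝ) / 3)
  have hT : 0 ≤ T := Real.rpow_nonneg hy _
  induction N using Nat.strong_induction_on with
  | _ N ih =>
  obtain rfl | hN0 := Nat.eq_zero_or_pos N
  · simp
  obtain ⟨M, K, rfl, hM, hKM⟩ : ∃ M K, N = M + K ∧ M < M + K ∧ K ≤ M + 1 ∧ M ≤ K :=
    ⟨N / 2, N - N / 2, by lia, by lia, by lia, by lia⟩
  have hKM' : (K : ℝ) ≤ M + 1 ∧ (M : ℝ) ≤ K := mod_cast hKM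
  have hK : (1 : ℝ) ≤ K := mod_cast (by lia : 1 ≤ K)
  push_cast at hN ⊢
  have initial := ih M hM (le_trans (by gcongr; linarith) hN)
  have block := abs_sum_sawtooth_div_le_of_le (c := c + M) (y := y) (N := K) (by linarith)
    (by nlinarith) (by linarith) β
  have log_gap : 1 / 3 ≤ Real.log (M + K + 1) - Real.log (M + 1) := by
    rw [← Real.log_div (by positivity) (by positivity)]
    refine le_trans ?_ (Real.one_sub_inv_le_log_of_pos (by positivity))
    rw [inv_div, le_sub_comm, div_le_iff₀ (by positivity)]
    linarith
  simp_rw [add_assoc c] at block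
  rw [sum_range_add]
  push_cast
  calc _ ≤ 975 * T * Real.log (M + 1) + 325 * T := (abs_add_le _ _).trans (add_le_add initial block)
    _ ≤ 975 * T * Real.log (M + K + 1) := by nlinarith

end SawtoothHyperbola

section HyperbolaMethod

/-- The pairs `(n, k)` of positive integers with `n (k + α) ≤ y`; the bounding box is large enough
for `0 ≤ α`. -/
noncomputable def hyperbolaPoints (α y : ℝ) : Finset (ℕ × ℕ) :=
  {q ∈ Icc 1 ⌊y⌋₊ ×ˢ Icc 1 ⌊y⌋₊ | q.1 * (q.2 + α) ≤ y}

variable {α y : ℝ}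

lemma mem_hyperbolaPoints (hα : 0 ≤ α) {q : ℕ × ℕ} :
    q ∈ hyperbolaPoints α y ↔ 1 ≤ q.1 ∧ 1 ≤ q.2 ∧ q.1 * (q.2 + α) ≤ y := by
  rw [hyperbolaPoints, mem_filter, mem_product, mem_Icc, mem_Icc]
  refine ⟨fun h => ⟨h.1.1.1, h.1.2.1, h.2⟩, fun ⟨h1, h2, h⟩ => ?_⟩
  have h1' : (1 : ℝ) ≤ q.1 := mod_cast h1
  have h2' : (1 : ℝ) ≤ q.2 := mod_cast h2
  exact ⟨⟨⟨h1, Nat.le_floor (by nlinarith)⟩, h2, Nat.le_floor (by nlinarith)⟩, h⟩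

lemma card_filter_fst_le_hyperbolaPoints (hα : 0 ≤ α) (N : ℕ) :
    #{q ∈ hyperbolaPoints α y | q.1 ≤ N} = ∑ n ∈ Icc 1 N, ⌊y / n - α⌋₊ := by
  rw [card_eq_sum_card_fiberwise (f := Prod.fst) (t := Icc 1 N) fun q hq => ?_]
  · refine sum_congr rfl fun n hn => ?_
    have fiber_eq : {q ∈ {q ∈ hyperbolaPoints α y | q.1 ≤ N} | q.1 = n} =
        {n} ×ˢ Icc 1 ⌊y / n - α⌋₊ := by
      ext ⟨m, k⟩
      rw [mem_filter, mem_filter, mem_hyperbolaPoints hα, mem_product, mem_singleton, mem_Icc]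
      rw [mem_Icc] at hn
      have hn0 : (0 : ℝ) < n := mod_cast hn.1
      constructor
      · rintro ⟨⟨⟨-, hk, h⟩, -⟩, rfl⟩
        rw [Nat.le_floor_iff' (by lia), le_sub_iff_add_le, le_div_iff₀' hn0]
        exact ⟨rfl, hk, h⟩
      · rintro ⟨rfl, hk, h⟩
        rw [Nat.le_floor_iff' (by lia), le_sub_iff_add_le, le_div_iff₀' hn0] at h
        exact ⟨⟨⟨hn.1, hk, h⟩, hn.2⟩, rfl⟩
    rw [fiber_eq, card_product, card_singleton, one_mul, Nat.card_Icc, Nat.add_sub_cancel]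
  · rw [mem_coe, mem_filter, mem_hyperbolaPoints hα] at hq
    exact mem_coe.2 (mem_Icc.2 ⟨hq.1.1, hq.2⟩)

lemma card_filter_snd_le_hyperbolaPoints (hα : 0 ≤ α) (K : ℕ) :
    #{q ∈ hyperbolaPoints α y | q.2 ≤ K} = ∑ k ∈ Icc 1 K, ⌊y / (k + α)⌋₊ := by
  rw [card_eq_sum_card_fiberwise (f := Prod.snd) (t := Icc 1 K) fun q hq => ?_]
  · refine sum_congr rfl fun k hk => ?_
    have fiber_eq : {q ∈ {q ∈ hyperbolaPoints α y | q.2 ≤ K} | q.2 = k} =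
        Icc 1 ⌊y / (k + α)⌋₊ ×ˢ {k} := by
      ext ⟨n, l⟩
      rw [mem_filter, mem_filter, mem_hyperbolaPoints hα, mem_product, mem_singleton, mem_Icc]
      rw [mem_Icc] at hk
      have hkα : 0 < k + α := add_pos_of_pos_of_nonneg (mod_cast hk.1) hα
      constructor
      · rintro ⟨⟨⟨hn, -, h⟩, -⟩, rfl⟩
        rw [Nat.le_floor_iff' (by lia), le_div_iff₀ hkα]
        exact ⟨⟨hn, h⟩, rfl⟩
      · rintro ⟨⟨hn, h⟩, rfl⟩
        rw [Nat.le_floor_iff' (by lia), le_div_iff₀ hkα] at h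
        exact ⟨⟨⟨hn, hk.1, h⟩, hk.2⟩, rfl⟩
    rw [fiber_eq, card_product, card_singleton, mul_one, Nat.card_Icc, Nat.add_sub_cancel]
  · rw [mem_coe, mem_filter, mem_hyperbolaPoints hα] at hq
    exact mem_coe.2 (mem_Icc.2 ⟨hq.1.2.1, hq.2⟩)

lemma card_hyperbolaPoints_add_mul (hα : 0 ≤ α) {N K : ℕ} (hNK : N * (K + α) ≤ y)
    (hy : y < (N + 1) * (K + 1 + α)) :
    #(hyperbolaPoints α y) + N * K =
      ∑ n ∈ Icc 1 N, ⌊y / n - α⌋₊ + ∑ k ∈ Icc 1 K, ⌊y / (k + α)⌋₊ := by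
  have union_eq : {q ∈ hyperbolaPoints α y | q.1 ≤ N} ∪ {q ∈ hyperbolaPoints α y | q.2 ≤ K} =
      hyperbolaPoints α y := by
    rw [← filter_or, filter_eq_self]
    rintro ⟨n, k⟩ hq
    by_contra! h
    have hn : (N : ℝ) + 1 ≤ n := mod_cast h.1
    have hk : (K : ℝ) + 1 ≤ k := mod_cast h.2
    have : ((N : ℝ) + 1) * (K + 1 + α) ≤ n * (k + α) := by gcongr
    linarith [((mem_hyperbolaPoints hα).1 hq).2.2]
  have inter_eq : {q ∈ hyperbolaPoints α y | q.1 ≤ N} ∩ {q ∈ hyperbolaPoints α y | q.2 ≤ K} =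
      Icc 1 N ×ˢ Icc 1 K := by
    ext ⟨n, k⟩
    simp only [mem_inter, mem_filter, mem_hyperbolaPoints hα, mem_product, mem_Icc]
    refine ⟨fun h => ⟨⟨h.1.1.1, h.1.2⟩, h.1.1.2.1, h.2.2⟩, fun ⟨⟨hn, hnN⟩, hk, hkK⟩ => ?_⟩
    have : (n : ℝ) * (k + α) ≤ N * (K + α) := by gcongr
    exact ⟨⟨⟨hn, hk, this.trans hNK⟩, hnN⟩, ⟨hn, hk, this.trans hNK⟩, hkK⟩
  have card_eq := card_union_add_card_inter {q ∈ hyperbolaPoints α y | q.1 ≤ N}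
    {q ∈ hyperbolaPoints α y | q.2 ≤ K}
  rwa [union_eq, inter_eq, card_product, Nat.card_Icc, Nat.card_Icc, Nat.add_sub_cancel,
    Nat.add_sub_cancel, card_filter_fst_le_hyperbolaPoints hα,
    card_filter_snd_le_hyperbolaPoints hα] at card_eq

lemma card_hyperbolaPoints (hα : 0 ≤ α) {N : ℕ} (hN : ⌊y⌋₊ ≤ N) :
    #(hyperbolaPoints α y) = ∑ n ∈ Icc 1 N, ⌊y / n - α⌋₊ := by
  rw [← card_filter_fst_le_hyperbolaPoints hα, filter_true_of_mem fun q hq => ?_]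
  exact (mem_Icc.1 (mem_product.1 (mem_filter.1 hq).1).1).2.trans hN

lemma card_dvd_floor_div_add_card_hyperbolaPoints (x : ℝ) (d : ℕ) :
    #{n ∈ Icc 1 ⌊x⌋₊ | d ∣ ⌊x / (n : ℕ)⌋₊} + #(hyperbolaPoints (1 / d) (x / d)) =
      #(hyperbolaPoints 0 (x / d)) := by
  have floor_le : ⌊x / d⌋₊ ≤ ⌊x⌋₊ := by
    rw [Nat.floor_div_natCast]
    exact Nat.div_le_self _ _
  rw [card_hyperbolaPoints (by positivity) floor_le, card_hyperbolaPoints le_rfl floor_le,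
    card_filter, ← sum_add_distrib]
  refine sum_congr rfl fun n hn => ?_
  obtain ⟨hn1, hnx⟩ := mem_Icc.1 hn
  obtain ⟨m, hm⟩ : ∃ m, ⌊x / n⌋₊ = m + 1 := by
    refine Nat.exists_eq_add_one.2 (Nat.floor_pos.2 ?_)
    rw [le_div_iff₀ (mod_cast hn1), one_mul]
    exact (Nat.le_floor_iff' (by lia)).1 hnx
  rw [sub_zero, div_right_comm, ← sub_div, Nat.floor_div_natCast (x / n - 1),
    Nat.floor_div_natCast (x / n), Nat.floor_sub_one, hm, Nat.succ_div, Nat.add_sub_cancel,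
    add_comm]

end HyperbolaMethod

section RealHarmonic

/-- The harmonic number `H_α = ∑ (1 / k - 1 / (k + α))` of a real argument. -/
noncomputable def realHarmonic (α : ℝ) : ℝ := ∑' k : ℕ, (1 / ((k : ℝ) + 1) - 1 / (k + 1 + α))

lemma hasSum_one_div_sub_one_div_succ {c : ℝ} (hc : 0 < c) :
    HasSum (fun k : ℕ => 1 / (c + k) - 1 / (c + k + 1)) (1 / c) := by
  have partial_sum (n : ℕ) :
      ∑ k ∈ range n, (1 / (c + k) - 1 / (c + k + 1)) = 1 / c - 1 / (c + n) := by
    simpa [add_assoc] using sum_range_sub' (fun k : ℕ => 1 / (c + k)) n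
  rw [hasSum_iff_tendsto_nat_of_nonneg fun k =>
    sub_nonneg.2 (one_div_le_one_div_of_le (by positivity) (by linarith))]
  simp_rw [partial_sum, one_div]
  simpa using (tendsto_inv_atTop_zero.comp
    (tendsto_atTop_add_const_left _ c tendsto_natCast_atTop_atTop)).const_sub c⁻¹

variable {α : ℝ}

lemma one_div_sub_one_div_add_nonneg (hα : 0 ≤ α) (k : ℕ) :
    0 ≤ 1 / ((k : ℝ) + 1) - 1 / (k + 1 + α) :=
  sub_nonneg.2 (one_div_le_one_div_of_le (by positivity) (by linarith))

lemma one_div_sub_one_div_add_le (hα : 0 ≤ α) (k : ℕ) :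
    1 / ((k : ℝ) + 1) - 1 / (k + 1 + α) ≤ α * (1 / (1 / 2 + k) - 1 / (1 / 2 + k + 1)) := by
  rw [div_sub_div _ _ (by positivity) (by positivity), div_sub_div _ _ (by positivity)
    (by positivity), mul_div_assoc', div_le_div_iff₀ (by positivity) (by positivity)]
  nlinarith [mul_nonneg (mul_nonneg hα hα) (by positivity : (0 : ℝ) ≤ k + 1)]

lemma le_one_div_sub_one_div_add (hα0 : 0 ≤ α) (hα1 : α ≤ 1) (k : ℕ) :
    α * (1 / (1 + k) - 1 / (1 + k + 1)) ≤ 1 / ((k : ℝ) + 1) - 1 / (k + 1 + α) := by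
  rw [div_sub_div _ _ (by positivity) (by positivity), div_sub_div _ _ (by positivity)
    (by positivity), mul_div_assoc', div_le_div_iff₀ (by positivity) (by positivity)]
  have : 0 ≤ α * (1 - α) * (k + 1) := by
    have := sub_nonneg.2 hα1
    positivity
  nlinarith

lemma summable_one_div_sub_one_div_add (hα : 0 ≤ α) :
    Summable fun k : ℕ => 1 / ((k : ℝ) + 1) - 1 / (k + 1 + α) :=
  ((hasSum_one_div_sub_one_div_succ one_half_pos).summable.mul_left α).of_nonneg_of_le
    (one_div_sub_one_div_add_nonneg hα) (one_div_sub_one_div_add_le hα)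

lemma realHarmonic_sub_sum_mem_Icc (hα0 : 0 ≤ α) (hα1 : α ≤ 1) (K : ℕ) :
    realHarmonic α - ∑ k ∈ range K, (1 / ((k : ℝ) + 1) - 1 / (k + 1 + α)) ∈
      Set.Icc (α / (K + 1)) (α / (K + 1 / 2)) := by
  have hsum := summable_one_div_sub_one_div_add hα0
  rw [realHarmonic, ← hsum.sum_add_tsum_nat_add K, add_sub_cancel_left]
  have tail := ((summable_nat_add_iff K).2 hsum).hasSum
  have shifted {c : ℝ} (hc : 0 < c) :
      HasSum (fun k : ℕ => α * (1 / (c + (k + K : ℕ)) - 1 / (c + (k + K : ℕ) + 1)))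
        (α / (K + c)) := by
    convert! (hasSum_one_div_sub_one_div_succ (c := K + c) (by positivity)).mul_left α using 1
    · funext k
      push_cast
      ring_nf
    · exact div_eq_mul_one_div _ _
  exact ⟨hasSum_le (fun k => le_one_div_sub_one_div_add hα0 hα1 _) (shifted one_pos) tail,
    hasSum_le (fun k => one_div_sub_one_div_add_le hα0 _) tail (shifted one_half_pos)⟩

lemma realHarmonic_mem_Icc (hα0 : 0 ≤ α) (hα1 : α ≤ 1) :
    realHarmonic α ∈ Set.Icc 0 (2 * α) := by
  have h := realHarmonic_sub_sum_mem_Icc hα0 hα1 0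
  rw [sum_range_zero, sub_zero, Nat.cast_zero, zero_add, zero_add, div_one,
    div_div_eq_mul_div, div_one, mul_comm] at h
  exact ⟨hα0.trans h.1, h.2⟩

end RealHarmonic

section DivisorCount

lemma natCast_floor_eq_sub_sawtooth {t : ℝ} (ht : 0 ≤ t) : (⌊t⌋₊ : ℝ) = t - 1 / 2 - sawtooth t := by
  rw [natCast_floor_eq_intCast_floor ht, ← Int.self_sub_fract, sawtooth]
  ring

lemma sum_Icc_one_eq_sum_range {M : Type*} [AddCommMonoid M] (f : ℕ → M) (N : ℕ) :
    ∑ n ∈ Icc 1 N, f n = ∑ n ∈ range N, f (n + 1) := by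
  rw [range_eq_Ico, sum_Ico_add' f 0 N 1]
  rfl

variable {x y α : ℝ} {N K : ℕ}

lemma log_natCast_add_one_le (hx : 3 ≤ x) (hN : (N : ℝ) ^ 2 ≤ x) :
    Real.log (N + 1) ≤ Real.log x :=
  Real.log_le_log (by positivity) (by nlinarith)

lemma abs_card_hyperbolaPoints_sub_le (hα0 : 0 ≤ α) (hα1 : α ≤ 1) (hx : 3 ≤ x) (hyx : y ≤ x)
    (hN : (N : ℝ) ^ 2 ≤ y) (hK : (K : ℝ) ^ 2 ≤ y) (hNK : N * (K + 1) ≤ y)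
    (hy : y < (N + 1) * (K + 1)) :
    |#(hyperbolaPoints α y) - (∑ n ∈ range N, (y / (n + 1) - α - 1 / 2) +
      ∑ k ∈ range K, (y / (k + 1 + α) - 1 / 2) - N * K)| ≤
      1950 * y ^ ((1 : ℝ) / 3) * Real.log x := by
  have hy0 : 0 ≤ y := (sq_nonneg _).trans hN
  have card_eq := card_hyperbolaPoints_add_mul hα0 (y := y) (N := N) (K := K)
    (le_trans (by gcongr) hNK)
    (hy.trans_le (mul_le_mul_of_nonneg_left (by linarith) (by positivity)))
  rw [sum_Icc_one_eq_sum_range, sum_Icc_one_eq_sum_range] at card_eq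
  have cast_eq : (#(hyperbolaPoints α y) : ℝ) + N * K =
      ∑ n ∈ range N, (⌊y / (n + 1) - α⌋₊ : ℝ) + ∑ k ∈ range K, (⌊y / (k + 1 + α)⌋₊ : ℝ) := by
    exact_mod_cast card_eq
  have fst_sum_eq : ∑ n ∈ range N, (⌊y / (n + 1) - α⌋₊ : ℝ) =
      ∑ n ∈ range N, (y / (n + 1) - α - 1 / 2) - ∑ n ∈ range N, sawtooth (y / (1 + n) + -α) := by
    rw [← sum_sub_distrib]
    refine sum_congr rfl fun n hn => ?_
    rw [natCast_floor_eq_sub_sawtooth, ← sub_eq_add_neg, add_comm (1 : ℝ)]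
    have hn' : (n : ℝ) + 1 ≤ N := mod_cast mem_range.1 hn
    rw [sub_nonneg, le_div_iff₀ (by positivity)]
    nlinarith
  have snd_sum_eq : ∑ k ∈ range K, (⌊y / (k + 1 + α)⌋₊ : ℝ) =
      ∑ k ∈ range K, (y / (k + 1 + α) - 1 / 2) - ∑ k ∈ range K, sawtooth (y / (1 + α + k) + 0) := by
    rw [← sum_sub_distrib]
    refine sum_congr rfl fun k _ => ?_
    rw [natCast_floor_eq_sub_sawtooth (by positivity), add_zero,
      show 1 + α + k = k + 1 + α by ring]
  have log_le {M : ℕ} (hM : (M : ℝ) ^ 2 ≤ y) : 975 * y ^ ((1 : ℝ) / 3) * Real.log (M + 1) ≤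
      975 * y ^ ((1 : ℝ) / 3) * Real.log x :=
    mul_le_mul_of_nonneg_left (log_natCast_add_one_le hx (hM.trans hyx)) (by positivity)
  have fst_le := (abs_sum_sawtooth_div_le le_rfl one_le_two hN (-α)).trans (log_le hN)
  have snd_le := (abs_sum_sawtooth_div_le (c := 1 + α) (by linarith) (by linarith) hK 0).trans
    (log_le hK)
  rw [abs_le] at fst_le snd_le ⊢
  constructor <;> linarith

lemma abs_mul_add_sum_sub_mul_realHarmonic_le (hα0 : 0 ≤ α) (hα1 : α ≤ 1) (hy0 : 0 ≤ y)
    (hyK : y < (K + 1) ^ 2) (hNK : N * (K + 1) ≤ y) (hy : y < (N + 1) * (K + 1)) :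
    |α * N + y * ∑ k ∈ range K, (1 / ((k : ℝ) + 1) - 1 / (k + 1 + α)) - y * realHarmonic α| ≤
      2 * α := by
  obtain ⟨tail_ge, tail_le⟩ := realHarmonic_sub_sum_mem_Icc hα0 hα1 K
  have y_tail_ge := mul_le_mul_of_nonneg_left tail_ge hy0
  have y_tail_le := mul_le_mul_of_nonneg_left tail_le hy0
  have lower : α * N ≤ y * (α / (K + 1)) := by
    rw [mul_div_assoc', le_div_iff₀ (by positivity)]
    nlinarith
  have hNK' : (N : ℝ) ≤ K := by
    have : (N : ℝ) < K + 1 := by nlinarith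
    exact_mod_cast Nat.lt_succ_iff.1 (mod_cast this)
  have upper : y * (α / (K + 1 / 2)) ≤ α * N + 2 * α := by
    rw [mul_div_assoc', div_le_iff₀ (by positivity)]
    nlinarith [mul_le_mul_of_nonneg_left hy.le hα0, mul_nonneg hα0 (sub_nonneg.2 hNK')]
  rw [abs_le]
  constructor <;> linarith

lemma exists_hyperbola_cutoffs (hy : 0 ≤ y) : ∃ N K : ℕ, (N : ℝ) ^ 2 ≤ y ∧ (K : ℝ) ^ 2 ≤ y ∧
    y < (K + 1) ^ 2 ∧ N * (K + 1) ≤ y ∧ y < (N + 1) * (K + 1) := by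
  set K := ⌊√y⌋₊
  have hK : (K : ℝ) ^ 2 ≤ y := by
    calc (K : ℝ) ^ 2 ≤ √y ^ 2 := by gcongr; exact Nat.floor_le (by positivity)
      _ = y := Real.sq_sqrt hy
  have hyK : y < (K + 1) ^ 2 := (Real.sqrt_lt' (by positivity)).1 (Nat.lt_floor_add_one _)
  have hNK : ⌊y / (K + 1)⌋₊ * ((K : ℝ) + 1) ≤ y :=
    (le_div_iff₀ (by positivity)).1 (Nat.floor_le (by positivity))
  refine ⟨⌊y / (K + 1)⌋₊, K, ?_, hK, hyK, hNK,
    (div_lt_iff₀ (by positivity)).1 (Nat.lt_floor_add_one _)⟩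
  have hle : ((⌊y / (K + 1)⌋₊ : ℕ) : ℝ) ≤ K + 1 := by
    refine (Nat.floor_le (by positivity)).trans ?_
    rw [div_le_iff₀ (by positivity)]
    nlinarith
  nlinarith [Nat.cast_nonneg (α := ℝ) ⌊y / (K + 1)⌋₊]

theorem abs_card_dvd_floor_div_sub_le (hx : 3 ≤ x) {d : ℕ} (hd : 1 ≤ d) :
    |#{n ∈ Icc 1 ⌊x⌋₊ | d ∣ ⌊x / (n : ℕ)⌋₊} - x / d * realHarmonic (1 / d)| ≤
      3902 * ((x / d) ^ ((1 : ℝ) / 3) * Real.log x) := by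
  have hd1 : (1 : ℝ) ≤ d := mod_cast hd
  have hα1 : (1 : ℝ) / d ≤ 1 := (div_le_one (by positivity)).2 hd1
  have hy0 : 0 ≤ x / d := by positivity
  have hyx : x / d ≤ x := div_le_self (by linarith) hd1
  obtain ⟨N, K, hN, hK, hyK, hNK, hy⟩ := exists_hyperbola_cutoffs hy0
  have card_zero := abs_card_hyperbolaPoints_sub_le le_rfl zero_le_one hx hyx hN hK hNK hy
  have card_inv := abs_card_hyperbolaPoints_sub_le (α := 1 / d) (by positivity) hα1 hx hyx hN hK
    hNK hy
  have main := abs_mul_add_sum_sub_mul_realHarmonic_le (by positivity) hα1 hy0 hyK hNK hy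
  have main_terms : (∑ n ∈ range N, (x / d / (n + 1) - 0 - 1 / 2) +
      ∑ k ∈ range K, (x / d / (k + 1 + 0) - 1 / 2) - N * K) -
      (∑ n ∈ range N, (x / d / (n + 1) - 1 / d - 1 / 2) +
      ∑ k ∈ range K, (x / d / (k + 1 + 1 / d) - 1 / 2) - N * K) =
      1 / d * N + x / d * ∑ k ∈ range K, (1 / ((k : ℝ) + 1) - 1 / (k + 1 + 1 / d)) := by
    simp only [sum_sub_distrib, sum_const, card_range, nsmul_eq_mul, mul_sub, mul_sum, mul_one_div,
      add_zero]
    ring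
  have card_eq : (#{n ∈ Icc 1 ⌊x⌋₊ | d ∣ ⌊x / (n : ℕ)⌋₊} : ℝ) +
      #(hyperbolaPoints (1 / d) (x / d)) = #(hyperbolaPoints 0 (x / d)) :=
    mod_cast card_dvd_floor_div_add_card_hyperbolaPoints x d
  have error_le : 2 * (1 / d) ≤ 2 * ((x / d) ^ ((1 : ℝ) / 3) * Real.log x) := by
    gcongr
    have log_ge : 1 ≤ Real.log x := by
      rw [Real.le_log_iff_exp_le (by linarith)]
      linarith [Real.exp_one_lt_three]
    calc (1 : ℝ) / d ≤ (1 / d) ^ ((1 : ℝ) / 3) :=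
          Real.self_le_rpow_of_le_one (by positivity) hα1 (by norm_num)
      _ ≤ (x / d) ^ ((1 : ℝ) / 3) := by gcongr; linarith
      _ ≤ (x / d) ^ ((1 : ℝ) / 3) * Real.log x := le_mul_of_one_le_right (by positivity) log_ge
  rw [abs_le] at card_zero card_inv main ⊢
  constructor <;> linarith

end DivisorCount

section DirichletConvolution

variable {a : ArithmeticFunction ℝ}

lemma hasSum_ite_dvd_div (a : ArithmeticFunction ℝ) {m : ℕ} (hm : m ≠ 0) :
    HasSum (fun d : ℕ => if d ∣ m then a d / d else 0)
      ((ArithmeticFunction.id * a : ArithmeticFunction ℝ) m / m) := by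
  have convolution_eq : (ArithmeticFunction.id * a : ArithmeticFunction ℝ) m / m =
      ∑ d ∈ m.divisors, if d ∣ m then a d / d else 0 := by
    rw [ArithmeticFunction.mul_apply, Nat.sum_divisorsAntidiagonal' fun i j =>
      (ArithmeticFunction.id : ArithmeticFunction ℝ) i * a j, sum_div]
    refine sum_congr rfl fun d hd => ?_
    have hdm := Nat.dvd_of_mem_divisors hd
    have hd0 : (d : ℝ) ≠ 0 := mod_cast ne_zero_of_dvd_ne_zero hm hdm
    rw [if_pos hdm, ArithmeticFunction.natCoe_apply, ArithmeticFunction.id_apply,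
      Nat.cast_div hdm hd0]
    field_simp
  rw [convolution_eq]
  exact hasSum_sum_of_ne_finset_zero fun d hd =>
    if_neg fun hdm => hd (Nat.mem_divisors.2 ⟨hdm, hm⟩)

lemma hasSum_div_mul_card_dvd_floor_div (a : ArithmeticFunction ℝ) (x : ℝ) :
    HasSum (fun d : ℕ => a d / d * #{n ∈ Icc 1 ⌊x⌋₊ | d ∣ ⌊x / (n : ℕ)⌋₊})
      (∑ n ∈ Icc 1 ⌊x⌋₊,
        (ArithmeticFunction.id * a : ArithmeticFunction ℝ) ⌊x / (n : ℝ)⌋₊ / ⌊x / (n : ℝ)⌋₊) := by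
  have floor_ne_zero {n : ℕ} (hn : n ∈ Icc 1 ⌊x⌋₊) : ⌊x / (n : ℝ)⌋₊ ≠ 0 := by
    obtain ⟨hn1, hnx⟩ := mem_Icc.1 hn
    rw [← Nat.pos_iff_ne_zero, Nat.floor_pos, le_div_iff₀ (mod_cast hn1), one_mul]
    exact (Nat.le_floor_iff' (by lia)).1 hnx
  convert! hasSum_sum fun n hn => hasSum_ite_dvd_div a (floor_ne_zero hn) using 2 with d
  rw [← sum_filter, sum_const, nsmul_eq_mul, mul_comm]

lemma hasSum_ite_dvd_one_div_mul_succ {d : ℕ} (hd : 0 < d) :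
    HasSum (fun m : ℕ => if d ∣ m then 1 / ((m : ℝ) * (m + 1)) else 0)
      (realHarmonic (1 / d) / d) := by
  have multiples_injective : Function.Injective fun k : ℕ => d * (k + 1) := fun k l h =>
    Nat.succ_injective (Nat.eq_of_mul_eq_mul_left hd h)
  rw [← multiples_injective.hasSum_iff]
  · convert! (summable_one_div_sub_one_div_add (α := 1 / d) (by positivity)).hasSum.div_const
      (d : ℝ) using 1
    funext k
    rw [Function.comp_apply, if_pos (dvd_mul_right _ _)]
    push_cast
    field_simp
    ring
  · intro m hm
    split_ifs with hdm
    · obtain ⟨_ | k, rfl⟩ := hdm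
      · simp
      · exact absurd ⟨k, rfl⟩ hm
    · rfl

lemma hasSum_div_mul_ite_dvd (c : ℝ) (d : ℕ) :
    HasSum (fun m : ℕ => c / d * if d ∣ m then 1 / ((m : ℝ) * (m + 1)) else 0)
      (c / d * (realHarmonic (1 / d) / d)) := by
  obtain rfl | hd := Nat.eq_zero_or_pos d
  · simp [hasSum_zero]
  · exact (hasSum_ite_dvd_one_div_mul_succ hd).mul_left _

lemma summable_div_mul_ite_dvd (ha : Summable fun d : ℕ => |a d| / (d : ℝ) ^ 3) :
    Summable fun q : ℕ × ℕ =>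
      a q.1 / q.1 * if q.1 ∣ q.2 then 1 / ((q.2 : ℝ) * (q.2 + 1)) else 0 := by
  have norm_eq (d m : ℕ) : ‖a d / d * if d ∣ m then 1 / ((m : ℝ) * (m + 1)) else 0‖ =
      |a d| / d * if d ∣ m then 1 / ((m : ℝ) * (m + 1)) else 0 := by
    split_ifs
    · rw [norm_mul, norm_div, Real.norm_natCast, Real.norm_eq_abs,
        Real.norm_of_nonneg (by positivity)]
    · simp
  refine .of_norm ((summable_prod_of_nonneg fun _ => norm_nonneg _).2 ⟨fun d => ?_, ?_⟩)
  · simp_rw [norm_eq]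
    exact (hasSum_div_mul_ite_dvd |a d| d).summable
  · simp_rw [norm_eq, (hasSum_div_mul_ite_dvd |a _| _).tsum_eq]
    have bound (d : ℕ) := realHarmonic_mem_Icc (α := 1 / d) (by positivity)
      (by simpa using Nat.cast_inv_le_one d)
    refine (ha.mul_left 2).of_nonneg_of_le (fun d => ?_) fun d => ?_
    · have := (bound d).1
      positivity
    · calc |a d| / d * (realHarmonic (1 / d) / d) ≤ |a d| / d * (2 * (1 / d) / d) := by
            gcongr
            exact (bound d).2
        _ = 2 * (|a d| / (d : ℝ) ^ 3) := by ring

lemma hasSum_div_mul_realHarmonic (ha : Summable fun d : ℕ => |a d| / (d : ℝ) ^ 3) :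
    HasSum (fun d : ℕ => a d / d * (realHarmonic (1 / d) / d))
      (∑' m : ℕ, (ArithmeticFunction.id * a : ArithmeticFunction ℝ) m / (m ^ 2 * (m + 1))) := by
  have summable := summable_div_mul_ite_dvd ha
  have column (m : ℕ) :
      ∑' d : ℕ, a d / d * (if d ∣ m then 1 / ((m : ℝ) * (m + 1)) else 0) =
        (ArithmeticFunction.id * a : ArithmeticFunction ℝ) m / (m ^ 2 * (m + 1)) := by
    obtain rfl | hm := eq_or_ne m 0
    · simp
    calc ∑' d : ℕ, a d / d * (if d ∣ m then 1 / ((m : ℝ) * (m + 1)) else 0)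
        = ∑' d : ℕ, (if d ∣ m then a d / d else 0) * (1 / (m * (m + 1))) := by
          simp only [ite_mul, mul_ite, zero_mul, mul_zero]
      _ = _ := by
          rw [tsum_mul_right, (hasSum_ite_dvd_div a hm).tsum_eq, div_mul_div_comm, mul_one,
            ← mul_assoc, sq]
  simp_rw [← column, ← (hasSum_div_mul_ite_dvd (a _) _).tsum_eq]
  rw [Summable.tsum_comm (f := fun d m : ℕ =>
    a d / d * (if d ∣ m then 1 / ((m : ℝ) * (m + 1)) else 0)) summable]
  exact summable.prod.hasSum

lemma norm_div_mul_card_dvd_floor_div_sub_le {x : ℝ} (hx : 3 ≤ x) (c : ℝ) (d : ℕ) :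
    ‖c / d * #{n ∈ Icc 1 ⌊x⌋₊ | d ∣ ⌊x / (n : ℕ)⌋₊} - x * (c / d * (realHarmonic (1 / d) / d))‖ ≤
      3902 * (x ^ ((1 : ℝ) / 3) * Real.log x) * (|c| / (d : ℝ) ^ ((4 : ℝ) / 3)) := by
  obtain rfl | hd := Nat.eq_zero_or_pos d
  · simp
  have hd0 : (0 : ℝ) < d := mod_cast hd
  calc ‖c / d * #{n ∈ Icc 1 ⌊x⌋₊ | d ∣ ⌊x / (n : ℕ)⌋₊} -
        x * (c / d * (realHarmonic (1 / d) / d))‖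
      = |c| / d *
          |#{n ∈ Icc 1 ⌊x⌋₊ | d ∣ ⌊x / (n : ℕ)⌋₊} - x / d * realHarmonic (1 / d)| := by
        rw [Real.norm_eq_abs, ← abs_of_pos hd0, ← abs_div, ← abs_mul, abs_of_pos hd0]
        ring_nf
    _ ≤ |c| / d * (3902 * ((x / d) ^ ((1 : ℝ) / 3) * Real.log x)) := by
        gcongr
        exact abs_card_dvd_floor_div_sub_le hx hd
    _ = 3902 * (x ^ ((1 : ℝ) / 3) * Real.log x) * (|c| / d ^ ((4 : ℝ) / 3)) := by
        rw [Real.div_rpow (by linarith) hd0.le, show (4 : ℝ) / 3 = 1 / 3 + 1 by norm_num,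
          Real.rpow_add hd0, Real.rpow_one]
        field_simp

theorem sum_idConvPrimeIndicator_ratio_floor_div_general
    (ha : Summable fun d : ℕ => |a d| / (d : ℝ) ^ ((4 : ℝ) / 3)) :
    (fun x : ℝ =>
        (∑ n ∈ Icc 1 ⌊x⌋₊,
          (ArithmeticFunction.id * a : ArithmeticFunction ℝ) ⌊x / (n : ℝ)⌋₊ /
            (⌊x / (n : ℝ)⌋₊ : ℝ)) -
        x * ∑' m : ℕ, (ArithmeticFunction.id * a : ArithmeticFunction ℝ) m / (m ^ 2 * (m + 1)))
    =O[atTop] fun x : ℝ => x ^ ((1 : ℝ) / 3) * Real.log x := by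
  have summable_cube : Summable fun d : ℕ => |a d| / (d : ℝ) ^ 3 := by
    refine ha.of_nonneg_of_le (fun d => by positivity) fun d => ?_
    obtain rfl | hd := Nat.eq_zero_or_pos d
    · simp
    gcongr
    rw [← Real.rpow_natCast]
    exact Real.rpow_le_rpow_of_exponent_le (mod_cast hd) (by norm_num)
  refine IsBigO.of_bound (3902 * ∑' d : ℕ, |a d| / (d : ℝ) ^ ((4 : ℝ) / 3)) ?_
  filter_upwards [eventually_ge_atTop 3] with x hx
  have log_nonneg : 0 ≤ Real.log x := Real.log_nonneg (by linarith)
  rw [← ((hasSum_div_mul_card_dvd_floor_div a x).sub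
    ((hasSum_div_mul_realHarmonic summable_cube).mul_left x)).tsum_eq,
    Real.norm_of_nonneg (by positivity : 0 ≤ x ^ ((1 : ℝ) / 3) * Real.log x)]
  refine (tsum_of_norm_bounded
    (ha.hasSum.mul_left (3902 * (x ^ ((1 : ℝ) / 3) * Real.log x))) fun d => ?_).trans_eq (by ring)
  exact norm_div_mul_card_dvd_floor_div_sub_le hx (a d) d

end DirichletConvolution

/-- The indicator function `1_P` of the primes. -/
def primeIndicator : ArithmeticFunction ℝ :=
  ⟨fun n => if n.Prime then 1 else 0, if_neg Nat.not_prime_zero⟩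

lemma idConvPrimeIndicator_eq_id_mul (n : ℕ) :
    idConvPrimeIndicator n = (ArithmeticFunction.id * primeIndicator : ArithmeticFunction ℝ) n := by
  rw [ArithmeticFunction.mul_apply, Nat.sum_divisorsAntidiagonal' fun i j =>
    (ArithmeticFunction.id : ArithmeticFunction ℝ) i * primeIndicator j, idConvPrimeIndicator,
    sum_filter]
  refine sum_congr rfl fun d _ => ?_
  simp [primeIndicator]

lemma summable_abs_primeIndicator_div_rpow {s : ℝ} (hs : 1 < s) :
    Summable fun d : ℕ => |primeIndicator d| / (d : ℝ) ^ s := by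
  refine (Real.summable_one_div_nat_rpow.2 hs).of_nonneg_of_le (fun d => by positivity) fun d => ?_
  gcongr
  change |if d.Prime then (1 : ℝ) else 0| ≤ 1
  split_ifs <;> simp

/-- For `f = id ∗ 1_P`,
`∑_{n ≤ x} f(⌊x/n⌋)/⌊x/n⌋ = x ∑_{m ≥ 1} f(m)/(m²(m+1)) + O(x^{1/3} log x)`. -/
theorem sum_idConvPrimeIndicator_ratio_floor_div :
    (fun x : ℝ =>
        (∑ n ∈ Finset.Icc 1 ⌊x⌋₊,
          idConvPrimeIndicator ⌊x / (n : ℝ)⌋₊ / (⌊x / (n : ℝ)⌋₊ : ℝ)) -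
        x * ∑' m : ℕ, idConvPrimeIndicator m / (m ^ 2 * (m + 1)))
    =O[atTop] fun x : ℝ => x ^ ((1 : ℝ) / 3) * Real.log x := by
  simp_rw [idConvPrimeIndicator_eq_id_mul]
  exact sum_idConvPrimeIndicator_ratio_floor_div_general
    (summable_abs_primeIndicator_div_rpow (by norm_num))
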